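/- arXiv:2411.12995 — 5 statements merged into one kernel-verified Lean document; each statement's English description precedes it below -/
import Mathlib

section
/- Under the fast-timescale recursion setup with step sizes α_k > 0, ∑_k α_k = ∞, ∑_k α_k² < ∞, and the conditional moment bounds E[‖G1_k‖² | F_k] ≤ C₁, E[g_k(i) | F_k] ≥ ε, E[g_k(i)² | F_k] ≤ C₂ almost surely for all k and all coordinates i, the iterates D_k satisfy sup_k E[‖D_k‖²] < ∞. -/
open MeasureTheory Filter

lemma aux_lint {Ω : Type*} (m : MeasurableSpace Ω) {m0 : MeasurableSpace Ω}
    (P : Measure Ω) [IsProbabilityMeasure P] (hm : m ≤ m0) (f h : Ω → ℝ) (C : ℝ)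
    (hf0 : ∀ ω, 0 ≤ f ω) (hfm : Measurable f) (hf : Integrable f P)
    (hC : ∀ᵐ ω ∂P, (P[f | m]) ω ≤ C)
    (hh0 : ∀ ω, 0 ≤ h ω) (hhm : Measurable[m] h) (hh : Integrable h P) :
    Integrable (fun ω => f ω * h ω) P ∧ ∫ ω, f ω * h ω ∂P ≤ C * ∫ ω, h ω ∂P := by
  have hhm' : Measurable h := hhm.mono hm le_rfl
  have hCpos : 0 ≤ C := by
    have h1 : ∀ᵐ ω ∂P, 0 ≤ (P[f | m]) ω := condExp_nonneg (ae_of_all _ hf0)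
    obtain ⟨ω, h2, h3⟩ := (hC.and h1).exists
    linarith
  have hset : ((P.withDensity fun ω => ENNReal.ofReal (f ω)).trim hm)
      ≤ ENNReal.ofReal C • (P.trim hm) := by
    refine Measure.le_iff.2 fun s hs => ?_
    rw [trim_measurableSet_eq hm hs, Measure.smul_apply, trim_measurableSet_eq hm hs,
      withDensity_apply _ (hm s hs),
      ← ofReal_integral_eq_lintegral_ofReal hf.integrableOn (ae_of_all _ hf0),
      ← setIntegral_condExp hm hf hs]
    have : ∫ x in s, (P[f | m]) x ∂P ≤ ∫ x in s, C ∂P :=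
      setIntegral_mono_ae integrable_condExp.integrableOn (integrable_const C).integrableOn hC
    refine (ENNReal.ofReal_le_ofReal this).trans ?_
    rw [setIntegral_const, smul_eq_mul, mul_comm, ENNReal.ofReal_mul hCpos, smul_eq_mul]
    simp [Measure.real]
  have hl : ∫⁻ ω, ENNReal.ofReal (f ω * h ω) ∂P
      ≤ ENNReal.ofReal C * ∫⁻ ω, ENNReal.ofReal (h ω) ∂P := by
    have e1 : ∫⁻ ω, ENNReal.ofReal (f ω * h ω) ∂P
        = ∫⁻ ω, ENNReal.ofReal (h ω) ∂(P.withDensity fun ω => ENNReal.ofReal (f ω)) := by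
      rw [lintegral_withDensity_eq_lintegral_mul _ hfm.ennreal_ofReal hhm'.ennreal_ofReal]
      refine lintegral_congr fun ω => ?_
      simp [ENNReal.ofReal_mul (hf0 ω)]
    rw [e1, ← lintegral_trim hm (hhm.ennreal_ofReal), ← lintegral_trim hm (hhm.ennreal_ofReal)]
    refine (lintegral_mono' hset le_rfl).trans ?_
    rw [lintegral_smul_measure, smul_eq_mul]
  rw [← ofReal_integral_eq_lintegral_ofReal hh (ae_of_all _ hh0),
    ← ENNReal.ofReal_mul hCpos] at hl
  have hint : Integrable (fun ω => f ω * h ω) P := by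
    refine ⟨(hfm.mul hhm').aestronglyMeasurable, ?_⟩
    rw [hasFiniteIntegral_iff_ofReal (ae_of_all _ fun ω => mul_nonneg (hf0 ω) (hh0 ω))]
    exact hl.trans_lt ENNReal.ofReal_lt_top
  refine ⟨hint, ?_⟩
  rw [← ofReal_integral_eq_lintegral_ofReal hint
    (ae_of_all _ fun ω => mul_nonneg (hf0 ω) (hh0 ω))] at hl
  exact (ENNReal.ofReal_le_ofReal_iff
    (mul_nonneg hCpos (integral_nonneg hh0))).1 hl

lemma aux_step {Ω : Type*} (m : MeasurableSpace Ω) {m0 : MeasurableSpace Ω}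
    (P : Measure Ω) [IsProbabilityMeasure P] (hm : m ≤ m0) (x y G g : Ω → ℝ) (a C₁ C₂ ε : ℝ) (ha : 0 < a)
    (hε : 0 < ε)
    (hx : Measurable[m] x) (hG : Measurable G) (hg : Measurable g)
    (hrec : ∀ ω, y ω = x ω + a * (G ω - g ω * x ω))
    (hx2 : Integrable (fun ω => x ω ^ 2) P)
    (hG2 : Integrable (fun ω => G ω ^ 2) P)
    (hG2b : ∫ ω, G ω ^ 2 ∂P ≤ C₁)
    (hgi : Integrable g P) (hg2 : Integrable (fun ω => g ω ^ 2) P)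
    (hgm : ∀ᵐ ω ∂P, ε ≤ (P[g | m]) ω)
    (hg2b : ∀ᵐ ω ∂P, (P[(fun ω => g ω ^ 2) | m]) ω ≤ C₂) :
    Integrable (fun ω => y ω ^ 2) P ∧
    ∫ ω, y ω ^ 2 ∂P ≤ (1 - a * ε + 2 * C₂ * a ^ 2) * ∫ ω, x ω ^ 2 ∂P
      + (a / ε + 2 * a ^ 2) * C₁ := by
  have hx' : Measurable x := hx.mono hm le_rfl
  obtain ⟨i1, b1⟩ := aux_lint m P hm (fun ω => g ω ^ 2) (fun ω => x ω ^ 2) C₂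
    (fun _ => sq_nonneg _) (hg.pow_const 2) hg2 hg2b (fun _ => sq_nonneg _) (hx.pow_const 2) hx2
  have i2 : Integrable (fun ω => x ω ^ 2 * g ω) P := by
    refine (hx2.add i1).mono' ((hx'.pow_const 2).mul hg).aestronglyMeasurable
      (ae_of_all _ fun ω => ?_)
    simp only [Pi.add_apply, Real.norm_eq_abs, abs_mul, abs_pow, sq_abs]
    have : |g ω| ≤ 1 + g ω ^ 2 := by nlinarith [sq_abs (g ω), sq_nonneg (|g ω| - 1), abs_nonneg (g ω)]
    nlinarith [sq_nonneg (x ω)]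
  have b2 : ε * ∫ ω, x ω ^ 2 ∂P ≤ ∫ ω, x ω ^ 2 * g ω ∂P := by
    have hc : P[(fun ω => x ω ^ 2) * g | m] =ᵐ[P] (fun ω => x ω ^ 2) * P[g | m] :=
      condExp_mul_of_stronglyMeasurable_left (hx.pow_const 2).stronglyMeasurable i2 hgi
    have h1 : ∫ ω, x ω ^ 2 * g ω ∂P = ∫ ω, (P[(fun ω => x ω ^ 2) * g | m]) ω ∂P :=
      (integral_condExp hm).symm
    rw [h1, ← integral_const_mul]
    refine integral_mono_ae (hx2.const_mul ε) integrable_condExp ?_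
    filter_upwards [hc, hgm] with ω h2 h3
    rw [h2]
    simp only [Pi.mul_apply]
    nlinarith [sq_nonneg (x ω)]
  set u : Ω → ℝ := fun ω => (1 + a * ε) * x ω ^ 2 + (-(2 * a)) * (x ω ^ 2 * g ω)
    + (2 * a ^ 2) * (g ω ^ 2 * x ω ^ 2) + (a / ε + 2 * a ^ 2) * G ω ^ 2 with hu
  have j1 := hx2.const_mul (1 + a * ε)
  have j2 := i2.const_mul (-(2 * a))
  have j3 := i1.const_mul (2 * a ^ 2)
  have j4 := hG2.const_mul (a / ε + 2 * a ^ 2)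
  have iu : Integrable u P := ((j1.add j2).add j3).add j4
  have hyu : ∀ ω, y ω ^ 2 ≤ u ω := fun ω => by
    rw [hrec, hu]
    have h1 : 2 * (x ω * G ω) ≤ ε * x ω ^ 2 + G ω ^ 2 / ε := by
      have : ε * x ω ^ 2 + G ω ^ 2 / ε - 2 * (x ω * G ω) = (ε * x ω - G ω) ^ 2 / ε := by
        field_simp; ring
      have : 0 ≤ (ε * x ω - G ω) ^ 2 / ε := by positivity
      linarith
    have h2 := mul_le_mul_of_nonneg_left h1 ha.le
    have h3 : 0 ≤ a ^ 2 * (G ω + g ω * x ω) ^ 2 := by positivity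
    have h4 : a / ε * G ω ^ 2 = a * (G ω ^ 2 / ε) := by ring
    simp only [add_mul, h4]
    nlinarith
  have hy : Measurable y := by
    rw [funext hrec]
    fun_prop
  have iy : Integrable (fun ω => y ω ^ 2) P :=
    iu.mono' (hy.pow_const 2).aestronglyMeasurable (ae_of_all _ fun ω => by
      rw [Real.norm_eq_abs, abs_of_nonneg (sq_nonneg _)]; exact hyu ω)
  refine ⟨iy, (integral_mono iy iu hyu).trans ?_⟩
  have e : ∫ ω, u ω ∂P = (1 + a * ε) * ∫ ω, x ω ^ 2 ∂P + (-(2 * a)) * ∫ ω, x ω ^ 2 * g ω ∂P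
    + (2 * a ^ 2) * ∫ ω, g ω ^ 2 * x ω ^ 2 ∂P + (a / ε + 2 * a ^ 2) * ∫ ω, G ω ^ 2 ∂P := by
    rw [← integral_const_mul, ← integral_const_mul, ← integral_const_mul, ← integral_const_mul,
      ← integral_add j1 j2]
    exact (integral_add ((j1.add j2).add j3) j4).trans
      (congrArg (· + _) (integral_add (j1.add j2) j3))
  rw [e]
  have k2 := mul_le_mul_of_nonneg_left b2 (by positivity : 0 ≤ 2 * a)
  have k3 := mul_le_mul_of_nonneg_left b1 (by positivity : 0 ≤ 2 * a ^ 2)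
  have k4 := mul_le_mul_of_nonneg_left hG2b (by positivity : 0 ≤ a / ε + 2 * a ^ 2)
  linarith

lemma aux_seq (a v : ℕ → ℝ) (C₁ C₂ ε : ℝ) (ha : ∀ k, 0 < a k) (hC₁ : 0 < C₁) (hC₂ : 0 < C₂)
    (hε : 0 < ε) (ha0 : Tendsto a atTop (nhds 0))
    (h : ∀ k, v (k + 1) ≤ (1 - a k * ε + 2 * C₂ * a k ^ 2) * v k
      + (a k / ε + 2 * a k ^ 2) * C₁) :
    ∃ C : ℝ, ∀ k, v k ≤ C := by
  have hev : ∀ᶠ k in atTop, a k < min 1 (min (ε / (4 * C₂)) (1 / ε)) :=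
    ha0.eventually_lt_const (by positivity)
  obtain ⟨K, hK⟩ := eventually_atTop.1 hev
  set B := (1 / ε + 2) * C₁ with hB
  set M := max (v K) (2 * B / ε) with hM
  have hBpos : 0 < B := by positivity
  have hM1 : 2 * B / ε ≤ M := le_max_right _ _
  have hMpos : 0 < M := lt_of_lt_of_le (by positivity) hM1
  have hMB : B ≤ ε / 2 * M := by
    rw [div_le_iff₀ hε] at hM1; linarith
  have hbig : ∀ k, K ≤ k → v k ≤ M := by
    intro k hk
    induction k, hk using Nat.le_induction with
    | base => exact le_max_left _ _
    | succ k hk ih =>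
      have h1 := hK k hk
      simp only [lt_min_iff] at h1
      obtain ⟨h1, h2, h3⟩ := h1
      rw [lt_div_iff₀ (by positivity)] at h2 h3
      have p := ha k
      have hc : 0 ≤ 1 - a k * ε + 2 * C₂ * a k ^ 2 := by
        have : 0 ≤ 2 * C₂ * a k ^ 2 := by positivity
        linarith
      have q1 := mul_le_mul_of_nonneg_left ih hc
      have q2 : 2 * C₂ * a k ^ 2 ≤ a k * (ε / 2) := by nlinarith
      have q3 := mul_le_mul_of_nonneg_right q2 hMpos.le
      have q4 : (a k / ε + 2 * a k ^ 2) * C₁ ≤ a k * B := by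
        have : a k / ε + 2 * a k ^ 2 ≤ a k * (1 / ε + 2) := by
          have : a k / ε = a k * (1 / ε) := by ring
          nlinarith
        have := mul_le_mul_of_nonneg_right this hC₁.le
        rw [hB]; linarith
      have q5 := mul_le_mul_of_nonneg_left hMB p.le
      have := h k
      nlinarith
  obtain ⟨C', hC'⟩ := ((Set.finite_lt_nat K).image v).bddAbove
  refine ⟨max M C', fun k => ?_⟩
  rcases le_or_gt K k with hk | hk
  · exact (hbig k hk).trans (le_max_left _ _)
  · exact (hC' ⟨k, hk, rfl⟩).trans (le_max_right _ _)

/-- Lemma 1 of the paper: under the fast-timescale recursion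
`D_{k+1}(i) = D_k(i) + α_k (G1_k(i) - g_k(i) D_k(i))` with square-summable (but
not summable) step sizes and the conditional moment bounds
`E[‖G1_k‖² | F_k] ≤ C₁`, `E[g_k(i) | F_k] ≥ ε`, `E[g_k(i)² | F_k] ≤ C₂`,
the second moments of the iterates are uniformly bounded:
`sup_k E[‖D_k‖²] < ∞`. -/
theorem fast_iterates_uniformly_L2_bounded
    {Ω : Type*} {m0 : MeasurableSpace Ω} (P : Measure Ω) [IsProbabilityMeasure P]
    (ℱ : Filtration ℕ m0) {n : ℕ}
    (α : ℕ → ℝ) (hα_pos : ∀ k, 0 < α k)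
    (hα_div : Tendsto (fun N => ∑ k ∈ Finset.range N, α k) atTop atTop)
    (hα_sq : Summable fun k => (α k) ^ 2)
    (D G1 g : ℕ → Ω → EuclideanSpace ℝ (Fin n))
    (d0 : EuclideanSpace ℝ (Fin n)) (hD0 : D 0 = fun _ => d0)
    (hG1meas : ∀ k, Measurable[ℱ (k + 1)] (G1 k))
    (hgmeas : ∀ k, Measurable[ℱ (k + 1)] (g k))
    (hDmeas : ∀ k, Measurable[ℱ k] (D k))
    (hrec : ∀ k, ∀ ω, ∀ i : Fin n,
      D (k + 1) ω i = D k ω i + α k * (G1 k ω i - g k ω i * D k ω i))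
    (C₁ C₂ ε : ℝ) (hC₁ : 0 < C₁) (hC₂ : 0 < C₂) (hε : 0 < ε)
    (hG1int : ∀ k, Integrable (fun ω => ‖G1 k ω‖ ^ 2) P)
    (hgint : ∀ k, ∀ i : Fin n, Integrable (fun ω => g k ω i) P)
    (hg2int : ∀ k, ∀ i : Fin n, Integrable (fun ω => (g k ω i) ^ 2) P)
    (hG1bound : ∀ k, ∀ᵐ ω ∂P, (P[(fun ω => ‖G1 k ω‖ ^ 2) | ℱ k]) ω ≤ C₁)
    (hgmean : ∀ k, ∀ i : Fin n, ∀ᵐ ω ∂P, ε ≤ (P[(fun ω => g k ω i) | ℱ k]) ω)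
    (hg2bound : ∀ k, ∀ i : Fin n, ∀ᵐ ω ∂P, (P[(fun ω => (g k ω i) ^ 2) | ℱ k]) ω ≤ C₂) :
    ∃ C : ℝ, ∀ k, ∫⁻ ω, ENNReal.ofReal (‖D k ω‖ ^ 2) ∂P ≤ ENNReal.ofReal C := by
  have hα0 : Tendsto α atTop (nhds 0) := by
    have h1 := (hα_sq.tendsto_atTop_zero).sqrt
    simpa [Real.sqrt_sq (hα_pos _).le] using h1
  have hGi : ∀ k, ∀ i : Fin n, Measurable fun ω => G1 k ω i := fun k i => by
    have := (hG1meas k).mono (ℱ.le _) le_rfl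
    fun_prop
  have hgi : ∀ k, ∀ i : Fin n, Measurable fun ω => g k ω i := fun k i => by
    have := (hgmeas k).mono (ℱ.le _) le_rfl
    fun_prop
  have hDi : ∀ k, ∀ i : Fin n, Measurable[ℱ k] fun ω => D k ω i := fun k i => by
    have := hDmeas k
    exact (show Measurable fun z : EuclideanSpace ℝ (Fin n) => z i by fun_prop).comp this
  have hle : ∀ k ω, ∀ i : Fin n, G1 k ω i ^ 2 ≤ ‖G1 k ω‖ ^ 2 := fun k ω i => by
    rw [EuclideanSpace.real_norm_sq_eq]
    exact Finset.single_le_sum (f := fun j => G1 k ω j ^ 2) (fun j _ => sq_nonneg _)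
      (Finset.mem_univ i)
  have hG2 : ∀ k, ∀ i : Fin n, Integrable (fun ω => G1 k ω i ^ 2) P := fun k i =>
    (hG1int k).mono' ((hGi k i).pow_const 2).aestronglyMeasurable (ae_of_all _ fun ω => by
      rw [Real.norm_eq_abs, abs_of_nonneg (sq_nonneg _)]; exact hle k ω i)
  have hG2b : ∀ k, ∀ i : Fin n, ∫ ω, G1 k ω i ^ 2 ∂P ≤ C₁ := fun k i => by
    refine (integral_mono (hG2 k i) (hG1int k) (hle k · i)).trans ?_
    rw [← integral_condExp (ℱ.le k)]
    refine (integral_mono_ae integrable_condExp (integrable_const C₁) (hG1bound k)).trans ?_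
    simp
  have hstep := fun k (i : Fin n) hx2 => aux_step (ℱ k) P (ℱ.le k) (fun ω => D k ω i)
    (fun ω => D (k + 1) ω i) (fun ω => G1 k ω i) (fun ω => g k ω i) (α k) C₁ C₂ ε (hα_pos k) hε
    (hDi k i) (hGi k i) (hgi k i) (fun ω => hrec k ω i) hx2 (hG2 k i) (hG2b k i)
    (hgint k i) (hg2int k i) (hgmean k i) (hg2bound k i)
  have hint : ∀ k, ∀ i : Fin n, Integrable (fun ω => D k ω i ^ 2) P := by
    intro k i
    induction k with
    | zero => simp only [hD0]; exact integrable_const _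
    | succ k ih => exact (hstep k i ih).1
  have hb : ∀ i : Fin n, ∃ C : ℝ, ∀ k, ∫ ω, D k ω i ^ 2 ∂P ≤ C := fun i =>
    aux_seq α _ C₁ C₂ ε hα_pos hC₁ hC₂ hε hα0 (fun k => (hstep k i (hint k i)).2)
  choose C hC using hb
  refine ⟨∑ i, C i, fun k => ?_⟩
  have e : ∀ ω, ‖D k ω‖ ^ 2 = ∑ i, D k ω i ^ 2 := fun ω => EuclideanSpace.real_norm_sq_eq _
  simp only [e]
  rw [← ofReal_integral_eq_lintegral_ofReal (integrable_finsetSum _ fun i _ => hint k i)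
    (ae_of_all _ fun ω => Finset.sum_nonneg fun i _ => sq_nonneg _),
    integral_finsetSum _ fun i _ => hint k i]
  exact ENNReal.ofReal_le_ofReal (Finset.sum_le_sum fun i _ => hC i k)
end

section
/- Under the fast-timescale recursion setup with step sizes α_k > 0, ∑_k α_k = ∞, ∑_k α_k² < ∞, and the conditional moment bounds E[‖G1_k‖² | F_k] ≤ C₁, E[g_k(i) | F_k] ≥ ε, E[g_k(i)² | F_k] ≤ C₂ almost surely for all k and all coordinates i, the iterates D_k are almost surely uniformly bounded: with probability one, sup_k ‖D_k‖ < ∞. -/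
open MeasureTheory Filter

/-- If `h ≥ 0` is integrable and `m`-measurable, and `u ≥ 0` has conditional expectation bounded
by `C`, then `h * u` is integrable. -/
lemma integrable_mul_of_condExp_le {Ω : Type*} {m m0 : MeasurableSpace Ω} (hm : m ≤ m0)
    (P : Measure Ω) [IsProbabilityMeasure P] (h u : Ω → ℝ) (hh : Measurable[m] h)
    (hu : Measurable u) (hhint : Integrable h P) (h0 : ∀ ω, 0 ≤ h ω)
    (huint : Integrable u P) (u0 : ∀ ω, 0 ≤ u ω) (C : ℝ)
    (hC : ∀ᵐ ω ∂P, (P[u | m]) ω ≤ C) :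
    Integrable (fun ω => h ω * u ω) P := by
  have hh' : Measurable h := hh.mono hm le_rfl
  refine ⟨(hh'.mul hu).aestronglyMeasurable, ?_⟩
  rw [hasFiniteIntegral_iff_ofReal (ae_of_all _ fun ω => mul_nonneg (h0 ω) (u0 ω))]
  let ν := P.withDensity (fun ω => ENNReal.ofReal (u ω))
  have hle : ν.trim hm ≤ ENNReal.ofReal C • P.trim hm := by
    refine Measure.le_iff.2 fun s hs => ?_
    rw [Measure.smul_apply, trim_measurableSet_eq hm hs, trim_measurableSet_eq hm hs,
      withDensity_apply _ (hm s hs),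
      ← ofReal_integral_eq_lintegral_ofReal huint.integrableOn (ae_of_all _ u0),
      ← setIntegral_condExp hm huint hs]
    have h1 : ∫ ω in s, (P[u | m]) ω ∂P ≤ ∫ ω in s, C ∂P :=
      setIntegral_mono_ae integrable_condExp.integrableOn (integrable_const C).integrableOn hC
    refine (ENNReal.ofReal_le_ofReal h1).trans ?_
    rw [setIntegral_const, smul_eq_mul, mul_comm, ENNReal.ofReal_mul' measureReal_nonneg,
      smul_eq_mul, ofReal_measureReal]
  have e1 : ∫⁻ ω, ENNReal.ofReal (h ω * u ω) ∂P = ∫⁻ ω, ENNReal.ofReal (h ω) ∂ν := by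
    rw [lintegral_withDensity_eq_lintegral_mul _ hu.ennreal_ofReal hh'.ennreal_ofReal]
    refine lintegral_congr fun ω => ?_
    rw [Pi.mul_apply, mul_comm, ENNReal.ofReal_mul (u0 ω)]
  have hmo : Measurable[m] (fun ω => ENNReal.ofReal (h ω)) := hh.ennreal_ofReal
  rw [e1, ← lintegral_trim hm hmo]
  refine (lintegral_mono' hle le_rfl).trans_lt ?_
  rw [lintegral_smul_measure, lintegral_trim hm hmo]
  refine ENNReal.mul_lt_top ENNReal.ofReal_lt_top ?_
  rw [← hasFiniteIntegral_iff_ofReal (ae_of_all _ h0)]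
  exact hhint.2

/-- One-step descent inequality for the squared distance to `[-M, M]`. -/
lemma step_pointwise (x G g u a s M : ℝ) (hu : G ^ 2 ≤ u) (ha : 0 < a) (hs : 0 < s)
    (hM : 0 ≤ M) :
    (max (|x + a * (G - g * x)| - M) 0) ^ 2 ≤
      (max (|x| - M) 0) ^ 2 + a * s * max (|x| - M) 0 +
      (a / s * max (|x| - M) 0 + 2 * a ^ 2) * u - (2 * a * (max (|x| - M) 0 * |x|)) * g
        + (2 * a ^ 2 * x ^ 2) * g ^ 2 := by
  set r := max (|x| - M) 0 with hr
  have hr0 : 0 ≤ r := le_max_right _ _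
  obtain ⟨q, hq1, hq2, hq3⟩ : ∃ q : ℝ, |q| = r ∧ |x - q| ≤ M ∧ q * x = r * |x| := by
    have key : |(|x| - r)| ≤ M := by
      rcases le_total (|x|) M with h | h
      · rw [hr, max_eq_right (by linarith)]; simpa using h
      · rw [hr, max_eq_left (by linarith)]; simp [abs_of_nonneg hM]
    rcases le_total 0 x with h | h
    · refine ⟨r, abs_of_nonneg hr0, ?_, by rw [abs_of_nonneg h]⟩
      rwa [abs_of_nonneg h] at key
    · refine ⟨-r, by rw [abs_neg, abs_of_nonneg hr0], ?_, by rw [abs_of_nonpos h]; ring⟩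
      rw [abs_of_nonpos h] at key
      rwa [← abs_neg, show -(x - -r) = -x - r by ring]
  set y := x + a * (G - g * x) with hy
  have h1 : (max (|y| - M) 0) ^ 2 ≤ (y - (x - q)) ^ 2 := by
    rw [← sq_abs (y - (x - q))]
    refine pow_le_pow_left₀ (le_max_right _ _) (max_le ?_ (abs_nonneg _)) 2
    have := abs_sub_abs_le_abs_sub y (x - q)
    linarith
  have hqq : q ^ 2 = r ^ 2 := by rw [← hq1, sq_abs]
  have hqG : 2 * (q * G) ≤ r * (u / s + s) := by
    have h2 : q * G ≤ r * |G| := by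
      rw [← hq1, ← abs_mul]; exact le_abs_self _
    have h3 : 2 * |G| ≤ u / s + s := by
      have : u / s + s - 2 * |G| = ((s - |G|) ^ 2 + (u - G ^ 2)) / s := by
        rw [← sq_abs G]; field_simp; ring
      have h4 : 0 ≤ ((s - |G|) ^ 2 + (u - G ^ 2)) / s := by
        apply div_nonneg _ hs.le
        nlinarith [sq_nonneg (s - |G|)]
      linarith
    nlinarith
  have e : (y - (x - q)) ^ 2 = r ^ 2 + a * (2 * (q * G)) - 2 * a * (r * |x|) * g
      + a ^ 2 * (G - g * x) ^ 2 := by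
    rw [hy, ← hq3, ← hqq]; ring
  have h5 : (G - g * x) ^ 2 ≤ 2 * u + 2 * (x ^ 2 * g ^ 2) := by
    nlinarith [sq_nonneg (G + g * x)]
  have h6 := mul_le_mul_of_nonneg_left h5 (sq_nonneg a)
  have h7 := mul_le_mul_of_nonneg_left hqG ha.le
  have e2 : a * (r * (u / s + s)) = a * s * r + a / s * r * u := by field_simp; ring
  nlinarith

/-- Almost-supermartingale (Robbins-Siegmund) boundedness. -/
lemma bdd_of_almost_supermartingale {Ω : Type*} {m0 : MeasurableSpace Ω} (P : Measure Ω)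
    [IsProbabilityMeasure P] (ℱ : Filtration ℕ m0) (V : ℕ → Ω → ℝ)
    (hV : ∀ k, Measurable[ℱ k] (V k)) (hVint : ∀ k, Integrable (V k) P)
    (V0 : ∀ k ω, 0 ≤ V k ω) (b : ℕ → ℝ) (hb : Summable b) (b0 : ∀ k, 0 ≤ b k)
    (c K : ℝ) (hc : 0 ≤ c) (hK : 0 ≤ K)
    (hstep : ∀ k, ∀ᵐ ω ∂P, (P[V (k + 1) | ℱ k]) ω ≤ (1 + c * b k) * V k ω + K * b k) :
    ∀ᵐ ω ∂P, BddAbove (Set.range fun k => V k ω) := by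
  let S : ℕ → ℝ := fun k => ∑ j ∈ Finset.range k, b j
  let T := ∑' j, b j
  have hST : ∀ k, S k ≤ T := fun k => hb.sum_le_tsum _ (fun j _ => b0 j)
  have hS0 : ∀ k, 0 ≤ S k := fun k => Finset.sum_nonneg fun j _ => b0 j
  have hSs : ∀ k, S (k + 1) = S k + b k := fun k => Finset.sum_range_succ _ _
  let A : ℕ → ℝ := fun k => Real.exp (-(c * S k))
  have hA0 : ∀ k, 0 < A k := fun k => Real.exp_pos _
  have hA1 : ∀ k, A k ≤ 1 := fun k =>
    Real.exp_le_one_iff.2 (by have := mul_nonneg hc (hS0 k); linarith)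
  have hAs : ∀ k, A (k + 1) * (1 + c * b k) ≤ A k := fun k => by
    have h1 : A (k + 1) = A k * Real.exp (-(c * b k)) := by
      change Real.exp _ = Real.exp _ * _
      rw [← Real.exp_add, hSs]; congr 1; ring
    rw [h1, mul_assoc]
    refine mul_le_of_le_one_right (hA0 k).le ?_
    rw [Real.exp_neg, inv_mul_le_iff₀ (Real.exp_pos _), mul_one, add_comm]
    exact Real.add_one_le_exp _
  let W : ℕ → Ω → ℝ := fun k ω => A k * V k ω + K * (T - S k)
  have hW0 : ∀ k ω, 0 ≤ W k ω := fun k ω =>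
    add_nonneg (mul_nonneg (hA0 k).le (V0 k ω)) (mul_nonneg hK (sub_nonneg.2 (hST k)))
  have hWint : ∀ k, Integrable (W k) P := fun k =>
    ((hVint k).const_mul (A k)).add (integrable_const _)
  have hWm : ∀ k, Measurable[ℱ k] (W k) := fun k => ((hV k).const_mul (A k)).add_const _
  have hsup : Supermartingale W ℱ P := by
    refine supermartingale_nat (fun k => (hWm k).stronglyMeasurable) hWint fun k => ?_
    have e1 : P[W (k + 1) | ℱ k] =ᵐ[P]
        P[A (k + 1) • V (k + 1) | ℱ k] + P[(fun _ => K * (T - S (k + 1))) | ℱ k] :=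
      condExp_add ((hVint (k + 1)).smul (A (k + 1))) (integrable_const _) (ℱ k)
    have e2 := condExp_smul (μ := P) (A (k + 1)) (V (k + 1)) (ℱ k)
    filter_upwards [e1, e2, hstep k] with ω h1 h2 h3
    rw [h1, Pi.add_apply, h2, condExp_const (ℱ.le k), Pi.smul_apply, smul_eq_mul]
    change _ ≤ A k * V k ω + K * (T - S k)
    have h4 := mul_le_mul_of_nonneg_left h3 (hA0 (k + 1)).le
    have h5 := mul_le_mul_of_nonneg_right (hAs k) (V0 k ω)
    have h6 := mul_le_mul_of_nonneg_right (hA1 (k + 1)) (mul_nonneg hK (b0 k))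
    rw [hSs]
    nlinarith
  have hbd : ∀ k, eLpNorm ((-W) k) 1 P ≤ ((∫ ω, W 0 ω ∂P).toNNReal : ENNReal) := fun k => by
    rw [Pi.neg_apply, eLpNorm_neg, eLpNorm_one_eq_lintegral_enorm]
    have h1 : ∫⁻ ω, ‖W k ω‖ₑ ∂P = ENNReal.ofReal (∫ ω, W k ω ∂P) := by
      rw [ofReal_integral_eq_lintegral_ofReal (hWint k) (ae_of_all _ (hW0 k))]
      exact lintegral_congr fun ω => Real.enorm_of_nonneg (hW0 k ω)
    rw [h1]
    refine ENNReal.ofReal_le_ofReal ?_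
    have := hsup.setIntegral_le (Nat.zero_le k) MeasurableSet.univ
    simpa using this
  filter_upwards [hsup.neg.exists_ae_tendsto_of_bdd hbd] with ω ⟨l, hl⟩
  have h2 : Tendsto (fun k => W k ω) atTop (nhds (-l)) := by simpa using hl.neg
  obtain ⟨B, hB⟩ := h2.bddAbove_range
  refine ⟨Real.exp (c * T) * B, ?_⟩
  rintro _ ⟨k, rfl⟩
  have h3 : W k ω ≤ B := hB ⟨k, rfl⟩
  have h4 : A k * V k ω ≤ B := by
    have := mul_nonneg hK (sub_nonneg.2 (hST k))
    change A k * V k ω + K * (T - S k) ≤ B at h3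
    linarith
  have h5 : Real.exp (-(c * T)) ≤ A k :=
    Real.exp_le_exp.2 (neg_le_neg (mul_le_mul_of_nonneg_left (hST k) hc))
  have h6 : Real.exp (-(c * T)) * V k ω ≤ B :=
    (mul_le_mul_of_nonneg_right h5 (V0 k ω)).trans h4
  rw [Real.exp_neg, inv_mul_le_iff₀ (Real.exp_pos _)] at h6
  exact h6

/-- One-dimensional version. -/
lemma one_dim_bdd {Ω : Type*} {m0 : MeasurableSpace Ω} (P : Measure Ω) [IsProbabilityMeasure P]
    (ℱ : Filtration ℕ m0) (α : ℕ → ℝ) (hα_pos : ∀ k, 0 < α k)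
    (hα_sq : Summable fun k => (α k) ^ 2)
    (D G g u : ℕ → Ω → ℝ) (d0 : ℝ) (hD0 : D 0 = fun _ => d0)
    (hum : ∀ k, Measurable (u k)) (hgm : ∀ k, Measurable (g k))
    (hDm : ∀ k, Measurable[ℱ k] (D k)) (hGu : ∀ k ω, G k ω ^ 2 ≤ u k ω)
    (hrec : ∀ k ω, D (k + 1) ω = D k ω + α k * (G k ω - g k ω * D k ω))
    (C₁ C₂ ε : ℝ) (hC₁ : 0 < C₁) (hC₂ : 0 < C₂) (hε : 0 < ε)
    (huint : ∀ k, Integrable (u k) P) (hgint : ∀ k, Integrable (g k) P)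
    (hg2int : ∀ k, Integrable (fun ω => g k ω ^ 2) P)
    (hub : ∀ k, ∀ᵐ ω ∂P, (P[u k | ℱ k]) ω ≤ C₁)
    (hgb : ∀ k, ∀ᵐ ω ∂P, ε ≤ (P[g k | ℱ k]) ω)
    (hg2b : ∀ k, ∀ᵐ ω ∂P, (P[(fun ω => g k ω ^ 2) | ℱ k]) ω ≤ C₂) :
    ∀ᵐ ω ∂P, BddAbove (Set.range fun k => |D k ω|) := by
  have hu0 : ∀ k ω, 0 ≤ u k ω := fun k ω => (sq_nonneg _).trans (hGu k ω)
  have hDm' : ∀ k, Measurable (D k) := fun k => (hDm k).mono (ℱ.le k) le_rfl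
  have hDg : ∀ k, Integrable (fun ω => D k ω ^ 2) P →
      Integrable (fun ω => D k ω ^ 2 * g k ω ^ 2) P := fun k hk =>
    integrable_mul_of_condExp_le (ℱ.le k) P _ _ ((hDm k).pow_const 2) ((hgm k).pow_const 2) hk
      (fun ω => sq_nonneg _) (hg2int k) (fun ω => sq_nonneg _) C₂ (hg2b k)
  have hD2 : ∀ k, Integrable (fun ω => D k ω ^ 2) P := by
    intro k
    induction k with
    | zero => rw [hD0]; exact integrable_const _
    | succ k ih =>
      refine Integrable.mono' (((ih.const_mul 3).add ((huint k).const_mul (3 * α k ^ 2))).add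
        ((hDg k ih).const_mul (3 * α k ^ 2))) ((hDm' (k + 1)).pow_const 2).aestronglyMeasurable
        (ae_of_all _ fun ω => ?_)
      rw [Real.norm_of_nonneg (sq_nonneg _), hrec]
      simp only [Pi.add_apply]
      have h1 := mul_le_mul_of_nonneg_left (hGu k ω) (sq_nonneg (α k))
      nlinarith [sq_nonneg (D k ω - α k * G k ω), sq_nonneg (D k ω + α k * (g k ω * D k ω)),
        sq_nonneg (α k * G k ω + α k * (g k ω * D k ω))]
  set s := Real.sqrt C₁ with hs
  have hs0 : 0 < s := Real.sqrt_pos.2 hC₁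
  have hss : s * s = C₁ := Real.mul_self_sqrt hC₁.le
  set M := s / ε with hM
  have hM0 : 0 < M := div_pos hs0 hε
  let r : ℕ → Ω → ℝ := fun k ω => max (|D k ω| - M) 0
  have hr0 : ∀ k ω, 0 ≤ r k ω := fun k ω => le_max_right _ _
  have hrD : ∀ k ω, r k ω ≤ |D k ω| := fun k ω => max_le (by linarith) (abs_nonneg _)
  have hrm : ∀ k, Measurable[ℱ k] (r k) := fun k =>
    (((measurable_norm.comp (hDm k)).sub_const M).max measurable_const)
  have habs : ∀ k, Measurable[ℱ k] (fun ω => |D k ω|) := fun k => measurable_norm.comp (hDm k)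
  have dom : ∀ k (f : Ω → ℝ), Measurable[ℱ k] f → (∀ ω, 0 ≤ f ω) →
      (∀ ω, f ω ≤ D k ω ^ 2 + 1) → Integrable f P := fun k f hf h0 h1 =>
    Integrable.mono' ((hD2 k).add (integrable_const 1))
      (hf.mono (ℱ.le k) le_rfl).aestronglyMeasurable
      (ae_of_all _ fun ω => by rw [Real.norm_of_nonneg (h0 ω)]; exact h1 ω)
  have hrint : ∀ k, Integrable (r k) P := fun k => dom k _ (hrm k) (hr0 k) fun ω => by
    have := hrD k ω
    nlinarith [sq_abs (D k ω), sq_nonneg (|D k ω| - 1), abs_nonneg (D k ω)]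
  have hr2int : ∀ k, Integrable (fun ω => r k ω ^ 2) P := fun k =>
    dom k _ ((hrm k).pow_const 2) (fun ω => sq_nonneg _) fun ω => by
      have := hrD k ω
      nlinarith [sq_abs (D k ω), hr0 k ω, abs_nonneg (D k ω)]
  have hrDint : ∀ k, Integrable (fun ω => r k ω * |D k ω|) P := fun k =>
    dom k _ ((hrm k).mul (habs k)) (fun ω => mul_nonneg (hr0 k ω) (abs_nonneg _)) fun ω => by
      have := hrD k ω
      nlinarith [sq_abs (D k ω), hr0 k ω, abs_nonneg (D k ω)]
  have hbdd : ∀ᵐ ω ∂P, BddAbove (Set.range fun k => r k ω ^ 2) := by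
    refine bdd_of_almost_supermartingale P ℱ (fun k ω => r k ω ^ 2)
      (fun k => (hrm k).pow_const 2) hr2int (fun k ω => sq_nonneg _) (fun k => α k ^ 2) hα_sq
      (fun k => sq_nonneg _) (4 * C₂) (2 * C₁ + 4 * C₂ * M ^ 2) (by positivity) (by positivity)
      fun k => ?_
    have ha := hα_pos k
    let X0 : Ω → ℝ := fun ω => r k ω ^ 2 + α k * s * r k ω
    let X1 : Ω → ℝ := fun ω => α k / s * r k ω + 2 * α k ^ 2
    let X2 : Ω → ℝ := fun ω => 2 * α k * (r k ω * |D k ω|)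
    let X3 : Ω → ℝ := fun ω => 2 * α k ^ 2 * D k ω ^ 2
    have m0' : Measurable[ℱ k] X0 := ((hrm k).pow_const 2).add ((hrm k).const_mul _)
    have m1 : Measurable[ℱ k] X1 := ((hrm k).const_mul _).add_const _
    have m2 : Measurable[ℱ k] X2 := ((hrm k).mul (habs k)).const_mul _
    have m3 : Measurable[ℱ k] X3 := ((hDm k).pow_const 2).const_mul _
    have p1 : ∀ ω, 0 ≤ X1 ω := fun ω => by have := hr0 k ω; positivity
    have p2 : ∀ ω, 0 ≤ X2 ω := fun ω => by have := hr0 k ω; positivity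
    have p3 : ∀ ω, 0 ≤ X3 ω := fun ω => by positivity
    have i0 : Integrable X0 P := (hr2int k).add ((hrint k).const_mul _)
    have i1 : Integrable X1 P := ((hrint k).const_mul _).add (integrable_const _)
    have i2 : Integrable X2 P := (hrDint k).const_mul _
    have i3 : Integrable X3 P := (hD2 k).const_mul _
    have j1 : Integrable (X1 * u k) P := integrable_mul_of_condExp_le (ℱ.le k) P X1 (u k) m1
      (hum k) i1 p1 (huint k) (hu0 k) C₁ (hub k)
    have j3 : Integrable (X3 * fun ω => g k ω ^ 2) P :=
      integrable_mul_of_condExp_le (ℱ.le k) P X3 _ m3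
        ((hgm k).pow_const 2) i3 p3 (hg2int k) (fun ω => sq_nonneg _) C₂ (hg2b k)
    have j2' : Integrable (fun ω => X2 ω * g k ω ^ 2) P :=
      integrable_mul_of_condExp_le (ℱ.le k) P X2 _ m2
        ((hgm k).pow_const 2) i2 p2 (hg2int k) (fun ω => sq_nonneg _) C₂ (hg2b k)
    have j2 : Integrable (X2 * g k) P := by
      refine Integrable.mono' (i2.add j2')
        ((m2.mono (ℱ.le k) le_rfl).mul (hgm k)).aestronglyMeasurable (ae_of_all _ fun ω => ?_)
      simp only [Pi.mul_apply, Pi.add_apply, norm_mul, Real.norm_eq_abs, abs_of_nonneg (p2 ω)]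
      have : |g k ω| ≤ 1 + g k ω ^ 2 := by nlinarith [sq_abs (g k ω), sq_nonneg (|g k ω| - 1), abs_nonneg (g k ω)]
      nlinarith [mul_le_mul_of_nonneg_left this (p2 ω)]
    have hmono := condExp_mono (m := ℱ k) (hr2int (k + 1)) (((i0.add j1).sub j2).add j3)
      (ae_of_all P fun ω => by
        have := step_pointwise (D k ω) (G k ω) (g k ω) (u k ω) (α k) s M (hGu k ω) ha hs0 hM0.le
        rw [← hrec] at this
        exact this)
    have c0 := condExp_of_stronglyMeasurable (μ := P) (ℱ.le k) m0'.stronglyMeasurable i0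
    filter_upwards [hmono, condExp_add ((i0.add j1).sub j2) j3 (ℱ k),
      condExp_sub (i0.add j1) j2 (ℱ k), condExp_add i0 j1 (ℱ k),
      condExp_mul_of_stronglyMeasurable_left m1.stronglyMeasurable j1 (huint k),
      condExp_mul_of_stronglyMeasurable_left m2.stronglyMeasurable j2 (hgint k),
      condExp_mul_of_stronglyMeasurable_left m3.stronglyMeasurable j3 (hg2int k),
      hub k, hgb k, hg2b k] with ω h1 h2 h3 h4 h5 h6 h7 b1 b2 b3
    refine h1.trans ?_
    rw [h2, Pi.add_apply, h3, Pi.sub_apply, h4, Pi.add_apply, c0, h5, h6, h7]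
    simp only [Pi.mul_apply]
    have q1 := mul_le_mul_of_nonneg_left b1 (p1 ω)
    have q2 := mul_le_mul_of_nonneg_left b2 (p2 ω)
    have q3 := mul_le_mul_of_nonneg_left b3 (p3 ω)
    have q4 : X0 ω + X1 ω * C₁ - X2 ω * ε + X3 ω * C₂ ≤
        (1 + 4 * C₂ * α k ^ 2) * r k ω ^ 2 + (2 * C₁ + 4 * C₂ * M ^ 2) * α k ^ 2 := by
      have t1 : r k ω * s ≤ r k ω * (ε * |D k ω|) := by
        rcases le_total (|D k ω|) M with h | h
        · have : r k ω = 0 := max_eq_right (by linarith)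
          rw [this]; simp
        · refine mul_le_mul_of_nonneg_left ?_ (hr0 k ω)
          have : s = ε * M := by rw [hM]; field_simp
          rw [this]; exact mul_le_mul_of_nonneg_left h hε.le
      have t2 : D k ω ^ 2 ≤ 2 * r k ω ^ 2 + 2 * M ^ 2 := by
        have : |D k ω| - M ≤ r k ω := le_max_left _ _
        rw [← sq_abs]
        nlinarith [sq_nonneg (r k ω - M), abs_nonneg (D k ω), hr0 k ω]
      have t3 : X1 ω * C₁ = α k * s * r k ω + 2 * α k ^ 2 * C₁ := by
        change (α k / s * r k ω + 2 * α k ^ 2) * C₁ = _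
        rw [← hss]; field_simp
      rw [t3]
      change r k ω ^ 2 + α k * s * r k ω + _ - 2 * α k * (r k ω * |D k ω|) * ε
        + 2 * α k ^ 2 * D k ω ^ 2 * C₂ ≤ _
      have t4 := mul_le_mul_of_nonneg_left t1 ha.le
      have t5 := mul_le_mul_of_nonneg_left t2 (by positivity : 0 ≤ 2 * α k ^ 2 * C₂)
      nlinarith
    linarith
  filter_upwards [hbdd] with ω ⟨B, hB⟩
  refine ⟨B + 1 + M, ?_⟩
  rintro _ ⟨k, rfl⟩
  have h1 : r k ω ^ 2 ≤ B := hB ⟨k, rfl⟩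
  have h2 : |D k ω| - M ≤ r k ω := le_max_left _ _
  change |D k ω| ≤ _
  nlinarith [sq_nonneg (r k ω - 1), hr0 k ω]

/-- Lemma 2 of the paper: under the fast-timescale recursion
`D_{k+1}(i) = D_k(i) + α_k (G1_k(i) - g_k(i) D_k(i))` with square-summable (but
not summable) step sizes and the conditional moment bounds
`E[‖G1_k‖² | F_k] ≤ C₁`, `E[g_k(i) | F_k] ≥ ε`, `E[g_k(i)² | F_k] ≤ C₂`,
the iterates are almost surely uniformly bounded:
with probability one, `sup_k ‖D_k‖ < ∞`. -/
theorem fast_iterates_uniformly_bounded_as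
    {Ω : Type*} {m0 : MeasurableSpace Ω} (P : Measure Ω) [IsProbabilityMeasure P]
    (ℱ : Filtration ℕ m0) {n : ℕ}
    (α : ℕ → ℝ) (hα_pos : ∀ k, 0 < α k)
    (hα_div : Tendsto (fun N => ∑ k ∈ Finset.range N, α k) atTop atTop)
    (hα_sq : Summable fun k => (α k) ^ 2)
    (D G1 g : ℕ → Ω → EuclideanSpace ℝ (Fin n))
    (d0 : EuclideanSpace ℝ (Fin n)) (hD0 : D 0 = fun _ => d0)
    (hG1meas : ∀ k, Measurable[ℱ (k + 1)] (G1 k))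
    (hgmeas : ∀ k, Measurable[ℱ (k + 1)] (g k))
    (hDmeas : ∀ k, Measurable[ℱ k] (D k))
    (hrec : ∀ k, ∀ ω, ∀ i : Fin n,
      D (k + 1) ω i = D k ω i + α k * (G1 k ω i - g k ω i * D k ω i))
    (C₁ C₂ ε : ℝ) (hC₁ : 0 < C₁) (hC₂ : 0 < C₂) (hε : 0 < ε)
    (hG1int : ∀ k, Integrable (fun ω => ‖G1 k ω‖ ^ 2) P)
    (hgint : ∀ k, ∀ i : Fin n, Integrable (fun ω => g k ω i) P)
    (hg2int : ∀ k, ∀ i : Fin n, Integrable (fun ω => (g k ω i) ^ 2) P)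
    (hG1bound : ∀ k, ∀ᵐ ω ∂P, (P[(fun ω => ‖G1 k ω‖ ^ 2) | ℱ k]) ω ≤ C₁)
    (hgmean : ∀ k, ∀ i : Fin n, ∀ᵐ ω ∂P, ε ≤ (P[(fun ω => g k ω i) | ℱ k]) ω)
    (hg2bound : ∀ k, ∀ i : Fin n, ∀ᵐ ω ∂P, (P[(fun ω => (g k ω i) ^ 2) | ℱ k]) ω ≤ C₂) :
    ∀ᵐ ω ∂P, BddAbove (Set.range fun k => ‖D k ω‖) := by
  have hcoord : ∀ i : Fin n, ∀ᵐ ω ∂P, BddAbove (Set.range fun k => |D k ω i|) := by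
    intro i
    have hev : Measurable (fun x : EuclideanSpace ℝ (Fin n) => x i) := by fun_prop
    refine one_dim_bdd P ℱ α hα_pos hα_sq (fun k ω => D k ω i) (fun k ω => G1 k ω i)
      (fun k ω => g k ω i) (fun k ω => ‖G1 k ω‖ ^ 2) (d0 i) (by rw [hD0])
      (fun k => (((hG1meas k).mono (ℱ.le _) le_rfl).norm).pow_const 2)
      (fun k => hev.comp ((hgmeas k).mono (ℱ.le _) le_rfl))
      (fun k => hev.comp (hDmeas k)) (fun k ω => ?_) (fun k ω => hrec k ω i)
      C₁ C₂ ε hC₁ hC₂ hε hG1int (fun k => hgint k i) (fun k => hg2int k i) hG1bound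
      (fun k => hgmean k i) (fun k => hg2bound k i)
    rw [← sq_abs]
    exact pow_le_pow_left₀ (abs_nonneg _) (PiLp.norm_apply_le (G1 k ω) i) 2
  filter_upwards [ae_all_iff.2 hcoord] with ω hω
  choose B hB using hω
  refine ⟨Real.sqrt (∑ i, B i ^ 2), ?_⟩
  rintro _ ⟨k, rfl⟩
  change ‖D k ω‖ ≤ _
  rw [EuclideanSpace.norm_eq]
  refine Real.sqrt_le_sqrt (Finset.sum_le_sum fun i _ => ?_)
  exact pow_le_pow_left₀ (norm_nonneg _) (hB i ⟨k, rfl⟩) 2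
end

section
/- Let a, b, c be real numbers with 0 ≤ a < 1, b ≥ 0, c ≥ 0, and define T : ℝ → ℝ by T(x) = √((a x + b)² + c). Then T has a unique fixed point x̄ ∈ ℝ, given by x̄ = (a b + √(b² + (1 − a²) c)) / (1 − a²), and this fixed point satisfies x̄ ≤ b/(1 − a) + √(c/(1 − a²)). -/
/-- Fixed-point computation for the comparison map `T x = √((a x + b)² + c)`
with `0 ≤ a < 1`: the unique fixed point is
`x̄ = (a b + √(b² + (1 - a²) c)) / (1 - a²)`, and it satisfies
`x̄ ≤ b / (1 - a) + √(c / (1 - a²))`. -/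
theorem comparison_map_fixed_point (a b c : ℝ)
    (ha0 : 0 ≤ a) (ha1 : a < 1) (hb : 0 ≤ b) (hc : 0 ≤ c) :
    Real.sqrt ((a * ((a * b + Real.sqrt (b ^ 2 + (1 - a ^ 2) * c)) / (1 - a ^ 2)) + b) ^ 2 + c)
        = (a * b + Real.sqrt (b ^ 2 + (1 - a ^ 2) * c)) / (1 - a ^ 2) ∧
    (∀ x : ℝ, Real.sqrt ((a * x + b) ^ 2 + c) = x →
      x = (a * b + Real.sqrt (b ^ 2 + (1 - a ^ 2) * c)) / (1 - a ^ 2)) ∧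
    (a * b + Real.sqrt (b ^ 2 + (1 - a ^ 2) * c)) / (1 - a ^ 2)
        ≤ b / (1 - a) + Real.sqrt (c / (1 - a ^ 2)) := by
  have hd : 0 < 1 - a ^ 2 := by nlinarith
  have hd' : 1 - a ^ 2 ≠ 0 := hd.ne'
  have h1 : 0 < 1 - a := by linarith
  have hN : 0 ≤ b ^ 2 + (1 - a ^ 2) * c := by positivity
  refine ⟨?_, ?_, ?_⟩
  · have hs0 := Real.sqrt_nonneg (b ^ 2 + (1 - a ^ 2) * c)
    have hs := Real.sq_sqrt hN
    set s := Real.sqrt (b ^ 2 + (1 - a ^ 2) * c) with hsdef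
    have hx0 : 0 ≤ (a * b + s) / (1 - a ^ 2) := by positivity
    have hx : (1 - a ^ 2) * ((a * b + s) / (1 - a ^ 2)) = a * b + s := by field_simp
    set x := (a * b + s) / (1 - a ^ 2) with hxdef
    rw [Real.sqrt_eq_iff_mul_self_eq (by positivity) hx0]
    have hs' : s = (1 - a ^ 2) * x - a * b := by linarith
    rw [hs'] at hs
    apply mul_left_cancel₀ hd'
    clear_value x s
    linear_combination -hs
  · intro x hx
    have hx0 : 0 ≤ x := hx ▸ Real.sqrt_nonneg _
    have hsq : (a * x + b) ^ 2 + c = x ^ 2 := by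
      have h := Real.sq_sqrt (show 0 ≤ (a * x + b) ^ 2 + c by positivity)
      rw [hx] at h
      exact h.symm
    have hle : a * x + b ≤ x := abs_le_of_sq_le_sq' (by linarith) hx0 |>.2
    have hpos : 0 ≤ (1 - a ^ 2) * x - a * b := by nlinarith
    have hs : Real.sqrt (b ^ 2 + (1 - a ^ 2) * c) = (1 - a ^ 2) * x - a * b := by
      rw [← Real.sqrt_sq hpos]
      congr 1
      linear_combination (1 - a ^ 2) * hsq
    rw [hs]
    field_simp
    ring
  · have hr0 := Real.sqrt_nonneg (c / (1 - a ^ 2))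
    have hr := Real.sq_sqrt (show 0 ≤ c / (1 - a ^ 2) by positivity)
    set r := Real.sqrt (c / (1 - a ^ 2)) with hrdef
    have hc' : c = (1 - a ^ 2) * r ^ 2 := by rw [hr]; field_simp
    have hs : Real.sqrt (b ^ 2 + (1 - a ^ 2) * c) ≤ b + (1 - a ^ 2) * r := by
      apply Real.sqrt_le_iff.2
      refine ⟨by positivity, ?_⟩
      have : 0 ≤ b * ((1 - a ^ 2) * r) := by positivity
      rw [hc']
      nlinarith
    have he : b / (1 - a) * (1 - a ^ 2) = b * (1 + a) := by
      have := h1.ne'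
      field_simp
      ring
    rw [div_le_iff₀ hd, add_mul, he]
    linarith
end

section
/- Let ε, A, B, C > 0 and c ≥ 0 with A ε ≤ 2, and let a, b be real exponents with 1/2 < a < b ≤ 1. Put α_k = A k^{-a} and β_k = B k^{-b} for k ≥ 1. Suppose (x_k)_{k≥1} is a sequence of nonnegative reals satisfying x_{k+1} ≤ √( ((1 − α_k ε/2) x_k + C β_k)² + c α_k² ) for all k ≥ 1. Then there exists a constant K > 0 such that x_k ≤ K (k^{-(b−a)} + k^{-a/2}) for all k ≥ 1. -/
set_option maxHeartbeats 2000000 in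
/-- Deterministic recursion-rate engine underlying Theorems 4 and 7: with fast
step sizes `α k = A k^{-a}` and slow step sizes `β k = B k^{-b}`,
`1/2 < a < b ≤ 1`, a nonnegative sequence satisfying
`x (k+1) ≤ √(((1 - α k ε/2) x k + C β k)² + c α k²)` decays at rate
`k^{-(b-a)} + k^{-a/2}`. -/
theorem recursion_rate_bound
    (ε A B C c : ℝ) (hε : 0 < ε) (hA : 0 < A) (hB : 0 < B) (hC : 0 < C) (hc : 0 ≤ c)
    (hAε : A * ε ≤ 2)
    (a b : ℝ) (ha : 1/2 < a) (hab : a < b) (hb : b ≤ 1)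
    (x : ℕ → ℝ) (hx : ∀ k, 1 ≤ k → 0 ≤ x k)
    (hrec : ∀ k : ℕ, 1 ≤ k →
      x (k + 1) ≤ Real.sqrt
        (((1 - (A * (k : ℝ) ^ (-a)) * ε / 2) * x k + C * (B * (k : ℝ) ^ (-b))) ^ 2
          + c * (A * (k : ℝ) ^ (-a)) ^ 2)) :
    ∃ K : ℝ, 0 < K ∧ ∀ k : ℕ, 1 ≤ k →
      x k ≤ K * ((k : ℝ) ^ (-(b - a)) + (k : ℝ) ^ (-a / 2)) := by
  have ha0 : 0 < a := by linarith
  obtain ⟨r, hr0, hr1, hr2, hr3⟩ : ∃ r : ℝ, 0 < r ∧ r ≤ b - a ∧ r ≤ a / 2 ∧ (r = b - a ∨ r = a / 2) := by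
    refine ⟨min (b - a) (a / 2), lt_min (by linarith) (by linarith), min_le_left _ _,
      min_le_right _ _, min_choice _ _⟩
  obtain ⟨d, hd⟩ : ∃ d : ℝ, d = A * ε / 2 := ⟨_, rfl⟩
  have hd0 : 0 < d := by rw [hd]; positivity
  have hd1 : d ≤ 1 := by rw [hd]; linarith
  have hlim : Filter.Tendsto (fun n : ℕ => (n : ℝ) ^ (1 - a)) Filter.atTop Filter.atTop :=
    (tendsto_rpow_atTop (by linarith)).comp tendsto_natCast_atTop_atTop
  obtain ⟨N, hN⟩ := Filter.eventually_atTop.1 (hlim.eventually_ge_atTop (4 / d))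
  obtain ⟨S, hS⟩ : ∃ S : ℝ, S = ∑ k ∈ Finset.range (N + 2), |x k * (k : ℝ) ^ r| := ⟨_, rfl⟩
  have hS0 : 0 ≤ S := by rw [hS]; positivity
  obtain ⟨K, hK⟩ : ∃ K : ℝ, K = S + 2 * (C * B) / d + (4 * (c * A ^ 2) / d + 1) := ⟨_, rfl⟩
  have h1 : 0 ≤ 2 * (C * B) / d := by positivity
  have h2 : 0 ≤ 4 * (c * A ^ 2) / d := by positivity
  have hK1 : 1 ≤ K := by linarith
  have hKS : S ≤ K := by linarith
  have hKC : C * B ≤ K * d / 2 := by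
    have : 2 * (C * B) / d ≤ K := by linarith
    rw [div_le_iff₀ hd0] at this
    linarith
  have hKc : c * A ^ 2 ≤ K ^ 2 * d / 4 := by
    have : 4 * (c * A ^ 2) / d ≤ K := by linarith
    rw [div_le_iff₀ hd0] at this
    nlinarith [mul_nonneg (mul_nonneg (by linarith : 0 ≤ K) (by linarith : 0 ≤ K - 1)) hd0.le]
  have hsmall : ∀ k : ℕ, 1 ≤ k → k ≤ N + 1 → x k ≤ K * (k : ℝ) ^ (-r) := by
    intro k hk hkN
    have hkp : (0 : ℝ) < k := by exact_mod_cast hk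
    have h3 : |x k * (k : ℝ) ^ r| ≤ S := by
      rw [hS]
      exact Finset.single_le_sum (f := fun k : ℕ => |x k * (k : ℝ) ^ r|)
        (fun i _ => abs_nonneg _) (Finset.mem_range.2 (by omega))
    have h4 : x k * (k : ℝ) ^ r ≤ K := (le_abs_self _).trans (h3.trans hKS)
    rw [Real.rpow_neg hkp.le, ← div_eq_mul_inv, le_div_iff₀ (Real.rpow_pos_of_pos hkp r)]
    exact h4
  have key : ∀ k : ℕ, 1 ≤ k → x k ≤ K * (k : ℝ) ^ (-r) := by
    intro k hk
    induction k, hk using Nat.le_induction with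
    | base => exact hsmall 1 le_rfl (by omega)
    | succ k hk ih =>
      by_cases hkN : k + 1 ≤ N + 1
      · exact hsmall (k + 1) (by omega) hkN
      have hNk := hN k (by omega)
      refine (hrec k hk).trans ?_
      have hx0 := hx k hk
      have hs1 : (1 : ℝ) ≤ k := by exact_mod_cast hk
      push_cast
      generalize x k = y at *
      generalize (k : ℝ) = s at *
      have hs0 : 0 < s := by linarith
      have hq0 : 0 < s ^ (-a) := Real.rpow_pos_of_pos hs0 _
      have hq1 : s ^ (-a) ≤ 1 := Real.rpow_le_one_of_one_le_of_nonpos hs1 (by linarith)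
      have hp0 : 0 < s ^ (-r) := Real.rpow_pos_of_pos hs0 _
      have hbq : s ^ (-b) ≤ s ^ (-a) * s ^ (-r) := by
        rw [← Real.rpow_add hs0]
        exact Real.rpow_le_rpow_of_exponent_le hs1 (by linarith)
      have hqp : s ^ (-a) ≤ (s ^ (-r)) ^ 2 := by
        rw [sq, ← Real.rpow_add hs0]
        exact Real.rpow_le_rpow_of_exponent_le hs1 (by linarith)
      have hb0 : 0 < s ^ (-b) := Real.rpow_pos_of_pos hs0 _
      have hsq : 4 ≤ s * s ^ (-a) * d := by
        rw [div_le_iff₀ hd0, sub_eq_add_neg, Real.rpow_add hs0, Real.rpow_one] at hNk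
        exact hNk
      have hp' : (s ^ (-r)) ^ 2 * (1 - 1 / s) ≤ ((s + 1) ^ (-r)) ^ 2 := by
        have e1 : ((s + 1) ^ (-r)) ^ 2 = (s ^ (-r)) ^ 2 * (s / (s + 1)) ^ (2 * r) := by
          rw [Real.div_rpow hs0.le (by linarith), sq, sq, ← Real.rpow_add hs0,
            ← Real.rpow_add (by linarith : 0 < s + 1), ← mul_div_assoc, ← Real.rpow_add hs0,
            show -r + -r + 2 * r = 0 by ring, Real.rpow_zero, one_div,
            ← Real.rpow_neg (by linarith)]
          congr 1; ring
        rw [e1]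
        refine mul_le_mul_of_nonneg_left ?_ (by positivity)
        have e2 : s / (s + 1) ≤ (s / (s + 1)) ^ (2 * r) := by
          conv_lhs => rw [← Real.rpow_one (s / (s + 1))]
          exact Real.rpow_le_rpow_of_exponent_ge (by positivity)
            ((div_le_one (by linarith)).2 (by linarith)) (by linarith)
        refine le_trans ?_ e2
        rw [le_div_iff₀ (by linarith)]
        have : (1 - 1 / s) * (s + 1) = s - 1 / s := by field_simp; ring
        rw [this]
        have : 0 < 1 / s := by positivity
        linarith
      have hP0 : 0 < (s + 1) ^ (-r) := Real.rpow_pos_of_pos (by linarith) _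
      have hsi : 1 / s ≤ s ^ (-a) * d / 4 := by
        rw [div_le_iff₀ hs0]; linarith
      have hAd : (A * s ^ (-a)) * ε / 2 = d * s ^ (-a) := by rw [hd]; ring
      rw [hAd]
      generalize s ^ (-a) = q at *
      generalize s ^ (-r) = p at *
      generalize s ^ (-b) = w at *
      generalize (s + 1) ^ (-r) = P at *
      have hdq : d * q ≤ 1 := by nlinarith
      have hdq0 : 0 < d * q := by positivity
      refine Real.sqrt_le_iff.2 ⟨by positivity, ?_⟩
      have hCB : 0 < C * B := by positivity
      have i1 : (1 - d * q) * y + C * (B * w) ≤ K * p * (1 - d * q / 2) := by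
        have j1 : (1 - d * q) * y ≤ (1 - d * q) * (K * p) :=
          mul_le_mul_of_nonneg_left ih (by linarith)
        have j2 : C * B * w ≤ C * B * (q * p) := mul_le_mul_of_nonneg_left hbq hCB.le
        have j3 : C * B * (q * p) ≤ K * d / 2 * (q * p) :=
          mul_le_mul_of_nonneg_right hKC (by positivity)
        nlinarith
      have i0 : 0 ≤ (1 - d * q) * y + C * (B * w) :=
        add_nonneg (mul_nonneg (by linarith) hx0) (by positivity)
      have i2 : ((1 - d * q) * y + C * (B * w)) ^ 2 ≤ (K * p) ^ 2 * (1 - d * q / 2) := by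
        calc _ ≤ (K * p * (1 - d * q / 2)) ^ 2 := pow_le_pow_left₀ i0 i1 2
          _ = (K * p) ^ 2 * (1 - d * q / 2) ^ 2 := by ring
          _ ≤ _ := mul_le_mul_of_nonneg_left (by nlinarith) (by positivity)
      have i3 : c * (A * q) ^ 2 ≤ (K * p) ^ 2 * (d * q / 4) := by
        calc c * (A * q) ^ 2 = (c * A ^ 2) * (q * q) := by ring
          _ ≤ (K ^ 2 * d / 4) * (q * p ^ 2) :=
            mul_le_mul hKc (mul_le_mul_of_nonneg_left hqp hq0.le) (by positivity) (by positivity)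
          _ = _ := by ring
      have i4 : (K * p) ^ 2 * (1 - d * q / 4) ≤ (K * P) ^ 2 := by
        calc (K * p) ^ 2 * (1 - d * q / 4) ≤ (K * p) ^ 2 * (1 - 1 / s) :=
            mul_le_mul_of_nonneg_left (by linarith) (by positivity)
          _ = K ^ 2 * (p ^ 2 * (1 - 1 / s)) := by ring
          _ ≤ K ^ 2 * P ^ 2 := mul_le_mul_of_nonneg_left hp' (by positivity)
          _ = _ := by ring
      linarith
  refine ⟨K, by linarith, fun k hk => (key k hk).trans ?_⟩
  have hkp : (0 : ℝ) < k := by exact_mod_cast hk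
  refine mul_le_mul_of_nonneg_left ?_ (by linarith)
  have u1 := Real.rpow_pos_of_pos hkp (-(b - a))
  have u2 := Real.rpow_pos_of_pos hkp (-a / 2)
  rcases hr3 with h | h
  · rw [h]; linarith
  · rw [h, ← neg_div]; linarith
end

section
/- Let r and c be real numbers with 0 < r < c ≤ 1. Then there exists a constant C > 0 such that for all integers k ≥ 1, ∑_{i=1}^{k} (∏_{j=i+1}^{k} (1 − c/j)) i^{-(1+r)} ≤ C k^{-r}. -/
theorem dce_step (r n : ℝ) (hr : 0 < r) (hr1 : r ≤ 1) (hn : 1 ≤ n) :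
    n ^ (-r) * (1 - r / n) ≤ (n + 1) ^ (-r) := by
  have hn0 : 0 < n := by linarith
  have h1 : (1 + 1 / n) ^ r ≤ 1 + r * (1 / n) :=
    rpow_one_add_le_one_add_mul_self (by have : 0 < 1 / n := by positivity
                                         linarith) hr.le hr1
  have e : n + 1 = n * (1 + 1 / n) := by field_simp
  have hp : 0 < 1 + 1 / n := by positivity
  rw [e, Real.mul_rpow hn0.le hp.le]
  refine mul_le_mul_of_nonneg_left ?_ (by positivity)
  rw [Real.rpow_neg hp.le]
  have hq : 0 < (1 + 1 / n) ^ r := by positivity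
  have hx : 0 < r / n := by positivity
  have hx1 : r / n ≤ 1 := by rw [div_le_one hn0]; linarith
  have h1' : (1 + 1 / n) ^ r ≤ 1 + r / n := by rw [mul_one_div] at h1; exact h1
  rw [← one_div, le_div_iff₀ hq]
  nlinarith

theorem dce_main (r c : ℝ) (hr : 0 < r) (hrc : r < c) (hc : c ≤ 1) (k : ℕ) :
    ∑ i ∈ Finset.Icc 1 k,
          (∏ j ∈ Finset.Icc (i + 1) k, (1 - c / (j : ℝ))) * (i : ℝ) ^ (-(1 + r)) ≤
        (1 / (c - r)) * ((k : ℝ) + 1) ^ (-r) := by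
  have hd : 0 < c - r := by linarith
  induction k with
  | zero => simp; linarith
  | succ k ih =>
    have hS : ∑ i ∈ Finset.Icc 1 (k + 1),
          (∏ j ∈ Finset.Icc (i + 1) (k + 1), (1 - c / (j : ℝ))) * (i : ℝ) ^ (-(1 + r))
        = (1 - c / ((k + 1 : ℕ) : ℝ)) * (∑ i ∈ Finset.Icc 1 k,
          (∏ j ∈ Finset.Icc (i + 1) k, (1 - c / (j : ℝ))) * (i : ℝ) ^ (-(1 + r)))
          + ((k + 1 : ℕ) : ℝ) ^ (-(1 + r)) := by
      rw [Finset.sum_Icc_succ_top (by omega), Finset.mul_sum]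
      congr 1
      · refine Finset.sum_congr rfl fun i hi => ?_
        rw [Finset.mem_Icc] at hi
        rw [Finset.prod_Icc_succ_top (by omega)]
        ring
      · simp
    rw [hS]
    push_cast
    have hn : (1 : ℝ) ≤ (k : ℝ) + 1 := by linarith [Nat.cast_nonneg (α := ℝ) k]
    generalize (k : ℝ) + 1 = n at *
    have hn0 : 0 < n := by linarith
    have h0 : 0 ≤ 1 - c / n := by
      rw [sub_nonneg, div_le_one hn0]; linarith
    have e : n ^ (-(1 + r)) = n ^ (-r) * (1 / n) := by
      rw [neg_add, Real.rpow_add hn0, Real.rpow_neg_one]; ring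
    calc _ ≤ (1 - c / n) * (1 / (c - r) * n ^ (-r)) + n ^ (-(1 + r)) := by gcongr
      _ = 1 / (c - r) * (n ^ (-r) * (1 - r / n)) := by
        rw [e]; field_simp; ring
      _ ≤ _ := by
        have := dce_step r n hr (by linarith) hn
        gcongr

/-- Discrete convolution estimate invoked in the proof of Theorem 5: with
contraction factors `∏_{j=i+1}^{k} (1 - c/j)` and perturbations `i^{-(1+r)}`,
the accumulated sum is of order `k^{-r}` provided `0 < r < c ≤ 1`. -/
theorem discrete_convolution_estimate (r c : ℝ) (hr : 0 < r) (hrc : r < c) (hc : c ≤ 1) :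
    ∃ C : ℝ, 0 < C ∧ ∀ k : ℕ, 1 ≤ k →
      ∑ i ∈ Finset.Icc 1 k,
          (∏ j ∈ Finset.Icc (i + 1) k, (1 - c / (j : ℝ))) * (i : ℝ) ^ (-(1 + r)) ≤
        C * (k : ℝ) ^ (-r) := by
  have hd : 0 < c - r := by linarith
  refine ⟨1 / (c - r), by positivity, fun k hk => (dce_main r c hr hrc hc k).trans ?_⟩
  have hk0 : (0 : ℝ) < k := by exact_mod_cast hk
  refine mul_le_mul_of_nonneg_left ?_ (by positivity)
  exact Real.rpow_le_rpow_of_nonpos hk0 (by linarith) (by linarith)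
end
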